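/- arXiv:2110.12431 — 2 statements merged into one kernel-verified Lean document; each statement's English description precedes it below -/
import Mathlib

section
/- Let G be a group acting geometrically (i.e., metrically properly and cocompactly) by automorphisms on a locally finite Helly graph X. Then every torsion subgroup of G is finite. -/
open SimpleGraph Pointwise

/-- A Helly graph: a connected simple graph in which every family of pairwise
intersecting combinatorial balls has a common point. -/
def IsHellyGraph {V : Type*} (Γ : SimpleGraph V) : Prop :=
  Γ.Connected ∧
  ∀ S : Set (V × ℕ),
    (∀ p ∈ S, ∀ q ∈ S, ∃ y : V, Γ.dist p.1 y ≤ p.2 ∧ Γ.dist q.1 y ≤ q.2) →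
    ∃ y : V, ∀ p ∈ S, Γ.dist p.1 y ≤ p.2

namespace HellyTorsion

/-- Abstract data: an integer metric with the Helly property and an isometric action. -/
structure HD {V : Type*} (d : V → V → ℕ) (G : Type*) [Group G] [MulAction G V] : Prop where
  zero : ∀ x, d x x = 0
  symm : ∀ x y, d x y = d y x
  tri : ∀ x y z, d x z ≤ d x y + d y z
  helly : ∀ S : Set (V × ℕ), (∀ p ∈ S, ∀ q ∈ S, d p.1 q.1 ≤ p.2 + q.2) →
    ∃ y, ∀ p ∈ S, d p.1 y ≤ p.2
  act : ∀ (g : G) u v, d (g • u) (g • v) = d u v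

section
variable {V : Type*} {d : V → V → ℕ} {G : Type*} [Group G] [MulAction G V]

lemma helly3 (D : HD d G) {a b c : V} {r s t : ℕ} (h1 : d a b ≤ r + s) (h2 : d b c ≤ s + t)
    (h3 : d a c ≤ r + t) : ∃ y, d a y ≤ r ∧ d b y ≤ s ∧ d c y ≤ t := by
  have z := D.zero
  obtain ⟨y, hy⟩ := D.helly {(a, r), (b, s), (c, t)} (by
    have e1 := D.symm a b
    have e2 := D.symm b c
    have e3 := D.symm a c
    rintro p (rfl | rfl | rfl) q (rfl | rfl | rfl) <;> simp only [z] <;> omega)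
  exact ⟨y, hy (a, r) (by simp), hy (b, s) (by simp), hy (c, t) (by simp)⟩

/-- Pumping. -/
lemma pump (D : HD d G) (o z : V) (h : G) (δ : ℕ) (hδ : 0 < δ) (h1 : d z (h • z) = δ)
    (h2 : d o (h • z) = d o z + δ)
    (h3 : ∀ v, d v z ≤ 1 → (d o v < d o z ↔ d o (h • v) < d o (h • z))) :
    ¬ IsOfFinOrder h := by
  have hpos : 1 ≤ d o z := by
    by_contra hc
    have h0 : d o z = 0 := by omega
    obtain ⟨y, hy1, hy2, -⟩ := helly3 D (a := o) (b := h • z) (c := h • z) (r := δ - 1) (s := 1)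
      (t := 1) (by omega) (by rw [D.zero]; omega) (by omega)
    have := (h3 (h⁻¹ • y) (by
      rw [← D.act h, smul_inv_smul, D.symm]; exact hy2)).2 (by rw [smul_inv_smul]; omega)
    omega
  -- cone lemma
  have cone : ∀ w u k, 1 ≤ d o w → d o u ≤ d o w - 1 + k → d w u ≤ k + 1 →
      ∃ v, d v w ≤ 1 ∧ d o v < d o w ∧ d v u ≤ k := by
    intro w u k hw ha hb
    obtain ⟨v, hv1, hv2, hv3⟩ := helly3 D (a := o) (b := w) (c := u) (r := d o w - 1) (s := 1)
      (t := k) (by omega) (by omega) (by omega)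
    exact ⟨v, by rw [D.symm]; exact hv2, by omega, by rw [D.symm]; exact hv3⟩
  have key : ∀ n : ℕ, d o (h ^ n • z) = d o z + n * δ ∧
      ∀ v, d v z ≤ 1 → (d o v < d o z ↔ d o (h ^ n • v) < d o (h ^ n • z)) := by
    intro n
    induction n with
    | zero => simp
    | succ n ih =>
      obtain ⟨ih1, ih2⟩ := ih
      have hdist : d (h ^ n • z) (h ^ (n + 1) • z) = δ := by
        rw [pow_succ, mul_smul, D.act, h1]
      have hpn : 1 ≤ d o (h ^ n • z) := by omega
      have hA : d o (h ^ (n + 1) • z) = d o (h ^ n • z) + δ := by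
        have hle := D.tri o (h ^ n • z) (h ^ (n + 1) • z)
        by_contra hne
        obtain ⟨v, hv1, hv2, hv3⟩ := cone (h ^ n • z) (h ^ (n + 1) • z) δ hpn (by omega) (by omega)
        have hv1' : d ((h ^ n)⁻¹ • v) z ≤ 1 := by
          rw [← D.act (h ^ n), smul_inv_smul]; exact hv1
        have hv2' := (ih2 _ hv1').2 (by rw [smul_inv_smul]; exact hv2)
        have hv3' : d ((h ^ n)⁻¹ • v) (h • z) ≤ δ := by
          rw [← D.act (h ^ n), smul_inv_smul, ← mul_smul, ← pow_succ]; exact hv3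
        have := D.tri o ((h ^ n)⁻¹ • v) (h • z)
        omega
      refine ⟨by rw [hA, ih1]; ring, ?_⟩
      intro v hv
      rw [h3 v hv]
      -- both sides are characterised by the previous state
      have hvz : d (h • v) (h • z) ≤ 1 := by rw [D.act]; exact hv
      have c1 : d o (h • v) < d o (h • z) ↔
          ∃ v0, d v0 z ≤ 1 ∧ d o v0 < d o z ∧ d v0 (h • v) ≤ δ := by
        constructor
        · intro hlt
          refine cone z (h • v) δ hpos (by omega) ?_
          have := D.tri z (h • z) (h • v)
          have := D.symm (h • z) (h • v)
          omega
        · rintro ⟨v0, -, hb, hc⟩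
          have := D.tri o v0 (h • v)
          omega
      have c2 : d o (h ^ (n + 1) • v) < d o (h ^ (n + 1) • z) ↔
          ∃ v0, d v0 (h ^ n • z) ≤ 1 ∧ d o v0 < d o (h ^ n • z) ∧
            d v0 (h ^ (n + 1) • v) ≤ δ := by
        constructor
        · intro hlt
          refine cone (h ^ n • z) _ δ hpn (by omega) ?_
          have := D.tri (h ^ n • z) (h ^ (n + 1) • z) (h ^ (n + 1) • v)
          have e := D.act (h ^ (n + 1)) z v
          have := D.symm z v
          omega
        · rintro ⟨v0, -, hb, hc⟩
          have := D.tri o v0 (h ^ (n + 1) • v)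
          omega
      rw [c1, c2]
      constructor
      · rintro ⟨v0, ha, hb, hc⟩
        refine ⟨h ^ n • v0, by rw [D.act]; exact ha, (ih2 v0 ha).1 hb, ?_⟩
        rw [pow_succ, mul_smul, D.act]; exact hc
      · rintro ⟨v0, ha, hb, hc⟩
        have ha' : d ((h ^ n)⁻¹ • v0) z ≤ 1 := by
          rw [← D.act (h ^ n), smul_inv_smul]; exact ha
        refine ⟨(h ^ n)⁻¹ • v0, ha', (ih2 _ ha').2 (by rw [smul_inv_smul]; exact hb), ?_⟩
        rw [← D.act (h ^ n), smul_inv_smul, ← mul_smul, ← pow_succ]; exact hc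
  intro hfin
  obtain ⟨n, hn, hn1⟩ := isOfFinOrder_iff_pow_eq_one.1 hfin
  have := (key n).1
  rw [hn1, one_smul] at this
  have : 0 < n * δ := Nat.mul_pos hn hδ
  omega

/-- The dual of a function. -/
noncomputable def star (d : V → V → ℕ) (f : V → ℝ) (u : V) : ℝ := ⨆ y, ((d u y : ℝ) - f y)

lemma star_bdd {f : V → ℝ} (hf : ∀ u v, (d u v : ℝ) ≤ f u + f v) (u : V) :
    BddAbove (Set.range fun y => ((d u y : ℝ) - f y)) :=
  ⟨f u, by rintro _ ⟨y, rfl⟩; have := hf u y; simp only; linarith⟩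

lemma le_star {f : V → ℝ} (hf : ∀ u v, (d u v : ℝ) ≤ f u + f v) (u y : V) :
    (d u y : ℝ) - f y ≤ star d f u := le_ciSup (star_bdd hf u) y

lemma star_le {f : V → ℝ} (u : V) (c : ℝ) (h : ∀ y, (d u y : ℝ) - f y ≤ c) :
    star d f u ≤ c := by
  have : Nonempty V := ⟨u⟩
  exact ciSup_le h

lemma retract (D : HD d G) (S : Set G) (θ : ℝ) (k : ℕ) : ∀ (f : V → ℝ),
    (∀ u v, (d u v : ℝ) ≤ f u + f v) →
    (∀ s ∈ S, ∀ u, |f (s • u) - f u| ≤ θ) → (∀ u, f u ≤ star d f u + 2 ^ k) →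
    ∃ f' : V → ℝ, (∀ u v, (d u v : ℝ) ≤ f' u + f' v) ∧
    (∀ s ∈ S, ∀ u, |f' (s • u) - f' u| ≤ θ) ∧ (∀ u, ∃ y, f' u + f' y ≤ d u y + 2) := by
  induction k with
  | zero =>
    intro f h1 h2 h3
    refine ⟨f, h1, h2, fun u => ?_⟩
    by_contra hc
    push Not at hc
    have := star_le (d := d) (f := f) u (f u - 2) (fun y => by have := hc y; linarith)
    have := h3 u
    norm_num at this
    linarith
  | succ k ih =>
    intro f h1 h2 h3
    have hsf : ∀ u, star d f u ≤ f u := fun u =>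
      star_le u _ (fun y => by have := h1 u y; linarith)
    have hq : ∀ u v, (d u v : ℝ) ≤ (f u + star d f u) / 2 + (f v + star d f v) / 2 := by
      intro u v
      have e1 := le_star h1 u v
      have e2 := le_star h1 v u
      rw [D.symm v u] at e2
      linarith
    refine ih (fun u => (f u + star d f u) / 2) hq ?_ ?_
    · intro s hs u
      have a1 := abs_le.1 (h2 s hs u)
      have a2 : star d f (s • u) ≤ star d f u + θ := by
        refine star_le _ _ (fun y => ?_)
        have e := le_star h1 u (s⁻¹ • y)
        rw [← D.act s, smul_inv_smul] at e
        have := abs_le.1 (h2 s hs (s⁻¹ • y))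
        rw [smul_inv_smul] at this
        linarith
      have a3 : star d f u ≤ star d f (s • u) + θ := by
        refine star_le _ _ (fun y => ?_)
        have e := le_star h1 (s • u) (s • y)
        rw [D.act] at e
        have := abs_le.1 (h2 s hs y)
        linarith
      rw [abs_le]
      constructor <;> linarith [a1.1, a1.2]
    · intro u
      have : star d f u ≤ star d (fun u => (f u + star d f u) / 2) u := by
        refine star_le _ _ (fun y => ?_)
        have e := le_star hq u y
        have := hsf y
        linarith
      have e := h3 u
      rw [pow_succ] at e
      linarith

/-- words in `S` displace `x` at most linearly with slope `θ` -/
def Good (d : V → V → ℕ) (S : Set G) (x : V) (θ : ℝ) : Prop :=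
  ∃ c : ℝ, ∀ l : List G, (∀ s ∈ l, s ∈ S) → (d x (l.prod • x) : ℝ) ≤ θ * l.length + c

lemma exists_fun (D : HD d G) (S : Set G) (hS : ∀ s ∈ S, s⁻¹ ∈ S) (x : V) (θ : ℝ) (hθ : 0 ≤ θ)
    (hg : Good d S x θ) :
    ∃ f : V → ℝ, (∀ u v, (d u v : ℝ) ≤ f u + f v) ∧
    (∀ s ∈ S, ∀ u, |f (s • u) - f u| ≤ θ) ∧ (∀ u, ∃ y, f u + f y ≤ d u y + 2) := by
  obtain ⟨c, hc⟩ := hg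
  have hc0 : 0 ≤ c := by have := hc [] (by simp); simpa [D.zero] using this
  let ι := {l : List G // ∀ s ∈ l, s ∈ S}
  let F : V → ι → ℝ := fun u l => c + θ * l.1.length + d u (l.1.prod • x)
  have : Nonempty ι := ⟨⟨[], by simp⟩⟩
  have hF0 : ∀ u l, 0 ≤ F u l := fun u l => by positivity
  have hb : ∀ u, BddBelow (Set.range (F u)) := fun u => ⟨0, by rintro _ ⟨l, rfl⟩; exact hF0 u l⟩
  let f : V → ℝ := fun u => ⨅ l, F u l
  have hfle : ∀ u l, f u ≤ F u l := fun u l => ciInf_le (hb u) l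
  have hlef : ∀ u a, (∀ l, a ≤ F u l) → a ≤ f u := fun u a h => le_ciInf h
  have hstep : ∀ s ∈ S, ∀ u, f (s • u) ≤ f u + θ := by
    intro s hs u
    rw [← sub_le_iff_le_add]
    refine hlef _ _ (fun l => ?_)
    have := hfle (s • u) ⟨s :: l.1, by
      intro t ht
      rcases List.mem_cons.1 ht with rfl | ht
      · exact hs
      · exact l.2 t ht⟩
    simp only [F, List.length_cons, List.prod_cons, mul_smul, D.act] at this ⊢
    push_cast at this
    linarith
  have hΔ : ∀ u v, (d u v : ℝ) ≤ f u + f v := by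
    intro u v
    rw [← sub_le_iff_le_add]
    refine hlef _ _ (fun l => ?_)
    rw [sub_le_iff_le_add, ← sub_le_iff_le_add']
    refine hlef _ _ (fun m => ?_)
    have hw := hc ((l.1.map (·⁻¹)).reverse ++ m.1) (by
      intro s hs
      rcases List.mem_append.1 hs with hs | hs
      · rw [List.mem_reverse, List.mem_map] at hs
        obtain ⟨t, ht, rfl⟩ := hs
        exact hS t (l.2 t ht)
      · exact m.2 s hs)
    rw [List.prod_append, ← List.prod_inv_reverse, mul_smul, ← D.act l.1.prod, smul_inv_smul] at hw
    simp only [List.length_append, List.length_reverse, List.length_map] at hw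
    have t1 := D.tri u (l.1.prod • x) v
    have t2 := D.tri (l.1.prod • x) (m.1.prod • x) v
    rw [D.symm (m.1.prod • x) v] at t2
    have t1' : (d u v : ℝ) ≤ d u (l.1.prod • x) + d (l.1.prod • x) v := by exact_mod_cast t1
    have t2' : (d (l.1.prod • x) v : ℝ) ≤ d (l.1.prod • x) (m.1.prod • x) + d v (m.1.prod • x) := by
      exact_mod_cast t2
    simp only [F]
    push_cast at hw
    linarith
  obtain ⟨k, hk⟩ := pow_unbounded_of_one_lt (2 * c) (by norm_num : (1 : ℝ) < 2)
  refine retract D S θ k f hΔ ?_ ?_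
  · intro s hs u
    have e1 := hstep s hs u
    have e2 := hstep _ (hS s hs) (s • u)
    rw [inv_smul_smul] at e2
    rw [abs_le]; constructor <;> linarith
  · intro u
    have e1 := hfle u ⟨[], by simp⟩
    have e2 := hfle x ⟨[], by simp⟩
    have e3 := le_star hΔ u x
    simp [F, D.zero] at e1 e2
    linarith

lemma exists_near (D : HD d G) (f : V → ℝ) (hf : ∀ u v, (d u v : ℝ) ≤ f u + f v) :
    ∃ z, ∀ u, (d u z : ℝ) ≤ f u + 1 := by
  have hf0 : ∀ u, 0 ≤ f u := fun u => by
    have := hf u u; rw [D.zero] at this; push_cast at this; linarith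
  obtain ⟨z, hz⟩ := D.helly (Set.range fun u => (u, ⌊f u + 1⌋₊)) (by
    rintro _ ⟨u, rfl⟩ _ ⟨v, rfl⟩
    have e1 := Nat.lt_floor_add_one (f u + 1)
    have e2 := Nat.lt_floor_add_one (f v + 1)
    have := hf u v
    have : (d u v : ℝ) ≤ ((⌊f u + 1⌋₊ + ⌊f v + 1⌋₊ : ℕ) : ℝ) := by push_cast; linarith
    exact_mod_cast this)
  refine ⟨z, fun u => ?_⟩
  have := hz _ ⟨u, rfl⟩
  have h2 : (d u z : ℝ) ≤ ⌊f u + 1⌋₊ := by exact_mod_cast this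
  exact h2.trans (Nat.floor_le (by linarith [hf0 u]))

/-- Rounding a path of functions to a path of vertices. -/
lemma round_path (D : HD d G) (p : ℕ → V → ℝ) (θ : ℝ) (hθ : 0 ≤ θ)
    (hp : ∀ i u v, (d u v : ℝ) ≤ p i u + p i v) (hs : ∀ i u, p i u ≤ p (i + 1) u + θ) :
    ∃ z : ℕ → V, (∀ i u, (d u (z i) : ℝ) ≤ p i u + 2) ∧
      ∀ i, d (z i) (z (i + 1)) + ⌊i * θ⌋₊ ≤ ⌊((i + 1 : ℕ) : ℝ) * θ⌋₊ := by
  have hp0 : ∀ i u, 0 ≤ p i u := fun i u => by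
    have := hp i u u; rw [D.zero] at this; push_cast at this; linarith
  let P : ℕ → V → Prop := fun i z => ∀ u, (d u z : ℝ) ≤ p i u + 1 + (i * θ - ⌊i * θ⌋₊)
  have step : ∀ i z, P i z → ∃ z', P (i + 1) z' ∧
      d z z' + ⌊i * θ⌋₊ ≤ ⌊((i + 1 : ℕ) : ℝ) * θ⌋₊ := by
    intro i z hz
    have hmono : ⌊i * θ⌋₊ ≤ ⌊((i + 1 : ℕ) : ℝ) * θ⌋₊ := by
      apply Nat.floor_mono; push_cast; nlinarith
    obtain ⟨τ, hτ⟩ := Nat.exists_eq_add_of_le hmono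
    have hfl : (⌊((i + 1 : ℕ) : ℝ) * θ⌋₊ : ℝ) ≤ ((i + 1 : ℕ) : ℝ) * θ :=
      Nat.floor_le (by positivity)
    have hτ' : (⌊((i + 1 : ℕ) : ℝ) * θ⌋₊ : ℝ) = ⌊i * θ⌋₊ + τ := by exact_mod_cast hτ
    set R : V → ℝ := fun u =>
      p (i + 1) u + 1 + (((i + 1 : ℕ) : ℝ) * θ - ⌊((i + 1 : ℕ) : ℝ) * θ⌋₊) with hR
    have hR0 : ∀ u, 0 ≤ R u := fun u => by
      have := hp0 (i + 1) u; simp only [hR]; linarith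
    have hzu : ∀ u, d u z ≤ ⌊R u⌋₊ + τ := by
      intro u
      have e1 := hz u
      have e2 := hs i u
      have e3 : (d u z : ℝ) ≤ R u + τ := by
        simp only [hR]; rw [hτ']; push_cast; linarith
      have := Nat.le_floor e3
      rwa [Nat.floor_add_natCast (hR0 u)] at this
    obtain ⟨z', hz'⟩ := D.helly (insert (z, τ) (Set.range fun u => (u, ⌊R u⌋₊))) (by
      have hzz := D.zero z
      rintro _ (rfl | ⟨u, rfl⟩) _ (rfl | ⟨v, rfl⟩)
      · simp [hzz]
      · have := hzu v
        have := D.symm z v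
        simp only; omega
      · exact hzu u
      · have e1 := Nat.lt_floor_add_one (R u)
        have e2 := Nat.lt_floor_add_one (R v)
        have := hp (i + 1) u v
        have : (d u v : ℝ) ≤ ((⌊R u⌋₊ + ⌊R v⌋₊ : ℕ) : ℝ) := by
          simp only [hR] at e1 e2 ⊢; push_cast at *; linarith
        exact_mod_cast this)
    refine ⟨z', fun u => ?_, ?_⟩
    · have := hz' _ (Or.inr ⟨u, rfl⟩)
      have h2 : (d u z' : ℝ) ≤ ⌊R u⌋₊ := by exact_mod_cast this
      exact h2.trans (Nat.floor_le (hR0 u))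
    · have := hz' _ (Or.inl rfl)
      simp only at this
      omega
  obtain ⟨z0, hz0⟩ := exists_near D (p 0) (hp 0)
  have hP0 : P 0 z0 := fun u => by simpa using hz0 u
  choose nx hnx using step
  let Z : (i : ℕ) → {z // P i z} := fun i =>
    Nat.rec ⟨z0, hP0⟩ (fun i w => ⟨nx i w.1 w.2, (hnx i w.1 w.2).1⟩) i
  refine ⟨fun i => (Z i).1, fun i u => ?_, fun i => ?_⟩
  · have := (Z i).2 u
    have := Nat.lt_floor_add_one (i * θ)
    linarith
  · exact (hnx i (Z i).1 (Z i).2).2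

lemma near_bound (D : HD d G) (f : V → ℝ) (hx : ∀ u, ∃ y, f u + f y ≤ d u y + 2) (w : V)
    (hw : ∀ u, (d u w : ℝ) ≤ f u + 2) : f w ≤ 4 := by
  obtain ⟨y, hy⟩ := hx w
  have := hw y
  rw [D.symm y w] at this
  linarith

/-- If the joint drift is at least `ρ`, then some word of any given length displaces `f` a lot. -/
lemma exists_word (D : HD d G) (S : Set G) (hS : ∀ s ∈ S, s⁻¹ ∈ S) (x : V) (f : V → ℝ)
    (hf : ∀ u v, (d u v : ℝ) ≤ f u + f v) (θ θ' : ℝ) (hθ : 0 ≤ θ) (hθ' : 0 ≤ θ')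
    (hl : ∀ s ∈ S, ∀ u, |f (s • u) - f u| ≤ θ) (hn : ¬ Good d S x θ') (K : ℕ) (hK : 0 < K) :
    ∃ l : List G, (∀ s ∈ l, s ∈ S) ∧ l.length = K ∧ ∃ o, f o + K * θ' ≤ f (l.prod⁻¹ • o) := by
  by_contra hc
  push Not at hc
  apply hn
  have triv : ∀ l : List G, (∀ s ∈ l, s ∈ S) → ∀ u, f (l.prod⁻¹ • u) ≤ f u + l.length * θ := by
    intro l
    induction l with
    | nil => intro _ u; simp
    | cons s l ih =>
      intro h u
      have h1 := ih (fun t ht => h t (List.mem_cons_of_mem _ ht)) (s⁻¹ • u)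
      have h2 := abs_le.1 (hl _ (hS s (h s List.mem_cons_self)) u)
      rw [List.prod_cons, mul_inv_rev, mul_smul, List.length_cons]
      push_cast
      linarith [h2.2]
  have main : ∀ n : ℕ, ∀ l : List G, l.length = n → (∀ s ∈ l, s ∈ S) → ∀ u,
      f (l.prod⁻¹ • u) ≤ f u + l.length * θ' + K * θ := by
    intro n
    induction n using Nat.strong_induction_on with
    | _ n ih =>
      intro l hln h u
      by_cases hlt : n < K
      · have := triv l h u
        have e1 : (l.length : ℝ) ≤ K := by rw [hln]; exact_mod_cast hlt.le
        have : (l.length : ℝ) * θ ≤ K * θ := by gcongr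
        have : 0 ≤ (l.length : ℝ) * θ' := by positivity
        linarith
      · have hlen1 : (l.take K).length = K := by rw [List.length_take]; omega
        have hlen2 : (l.drop K).length = n - K := by rw [List.length_drop]; omega
        have h1 := hc (l.take K) (fun s hs => h s (List.mem_of_mem_take hs)) hlen1 u
        have h2 := ih (n - K) (by omega) (l.drop K) hlen2
          (fun s hs => h s (List.mem_of_mem_drop hs)) ((l.take K).prod⁻¹ • u)
        rw [← mul_smul, ← mul_inv_rev, ← List.prod_append, List.take_append_drop] at h2
        rw [hlen2, Nat.cast_sub (by omega)] at h2
        rw [hln]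
        linarith
  obtain ⟨z, hz⟩ := exists_near D f hf
  refine ⟨2 * d x z + f z + 1 + K * θ, fun l h => ?_⟩
  have e1 := main _ l rfl h z
  have e2 := hz (l.prod⁻¹ • z)
  rw [← D.act l.prod, smul_inv_smul] at e2
  have t1 := D.tri x z (l.prod • x)
  have t2 := D.tri z (l.prod • z) (l.prod • x)
  rw [D.act, D.symm z x] at t2
  have t3 : (d x (l.prod • x) : ℝ) ≤ 2 * d x z + d z (l.prod • z) := by
    have : d x (l.prod • x) ≤ 2 * d x z + d z (l.prod • z) := by omega
    exact_mod_cast this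
  linarith

lemma prod_take_step (l : List G) (i : ℕ) :
    (l.take (i + 1)).prod = (l.take i).prod ∨
      ∃ s ∈ l, (l.take (i + 1)).prod = (l.take i).prod * s := by
  by_cases h : i < l.length
  · right
    refine ⟨l[i], List.getElem_mem h, ?_⟩
    rw [List.take_add_one, List.prod_append]
    simp [h]
  · left
    rw [List.take_of_length_le (by omega), List.take_of_length_le (by omega)]

lemma drift_contra (D : HD d G) (S : Set G) (hS : ∀ s ∈ S, s⁻¹ ∈ S) (x : V) (ρ : ℝ) (hρ : 0 < ρ)
    (hnot : ∀ θ, 0 ≤ θ → θ < ρ → ¬ Good d S x θ) (hgood : ∀ θ, ρ < θ → Good d S x θ)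
    (β : ℕ) (hβ : ∀ z, ∃ B : Finset V, B.card ≤ β ∧ ∀ v, d z v ≤ 7 → v ∈ B) :
    ∃ h ∈ Subgroup.closure S, ¬ IsOfFinOrder h := by
  classical
  obtain ⟨N, hN⟩ := exists_nat_gt (1 / ρ)
  rw [div_lt_iff₀ hρ] at hN
  have hN0 : 0 < N := by
    rcases Nat.eq_zero_or_pos N with rfl | h
    · norm_num at hN
    · exact h
  set M := β * (2 ^ β * 12) + 1 with hM
  set K := N * M with hKdef
  have hK0 : 0 < K := Nat.mul_pos hN0 (by omega)
  have hKR : (0 : ℝ) < K := by exact_mod_cast hK0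
  obtain ⟨ε, hε0, hερ, hεK⟩ : ∃ ε : ℝ, 0 < ε ∧ ε ≤ ρ ∧ 2 * K * ε ≤ 1 := by
    refine ⟨min ρ (1 / (2 * K)), by positivity, min_le_left _ _, ?_⟩
    calc 2 * (K : ℝ) * min ρ (1 / (2 * K)) ≤ 2 * K * (1 / (2 * K)) := by
          gcongr; exact min_le_right _ _
      _ = 1 := by field_simp
  set θ := ρ + ε with hθdef
  have hθ : 0 ≤ θ := by positivity
  obtain ⟨f, hf, hl, hx⟩ := exists_fun D S hS x θ hθ (hgood θ (by linarith))
  obtain ⟨l, hlS, hlK, o, ho⟩ := exists_word D S hS x f hf θ (ρ - ε) hθ (by linarith) hl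
    (hnot _ (by linarith) (by linarith)) K hK0
  let h : ℕ → G := fun i => (l.take i).prod
  let p : ℕ → V → ℝ := fun i u => f ((h i)⁻¹ • u)
  have hp : ∀ i u v, (d u v : ℝ) ≤ p i u + p i v := by
    intro i u v
    have := hf ((h i)⁻¹ • u) ((h i)⁻¹ • v)
    rwa [D.act] at this
  have hstep : ∀ i u, |p (i + 1) u - p i u| ≤ θ := by
    intro i u
    rcases prod_take_step l i with e | ⟨s, hs, e⟩
    · simp only [p, h, e, sub_self, abs_zero]; exact hθ
    · simp only [p, h, e, mul_inv_rev, mul_smul]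
      exact hl _ (hS s (hlS s hs)) _
  obtain ⟨z, hz1, hz2⟩ := round_path D p θ hθ hp (fun i u => by
    have := abs_le.1 (hstep i u); linarith [this.1])
  have hup : ∀ i k : ℕ, p (i + k) o ≤ p i o + k * θ := by
    intro i k
    induction k with
    | zero => simp
    | succ k ih =>
      have := abs_le.1 (hstep (i + k) o)
      rw [← add_assoc]
      push_cast
      linarith [this.2]
  have hp0 : p 0 o = f o := by simp [p, h]
  have hpK : p K o = f (l.prod⁻¹ • o) := by
    simp only [p, h]; rw [List.take_of_length_le (by omega)]
  have hlow : ∀ i ≤ K, f o + i * θ - 1 ≤ p i o := by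
    intro i hi
    have e := hup i (K - i)
    rw [Nat.add_sub_cancel' hi, hpK, Nat.cast_sub hi] at e
    nlinarith
  have hupp : ∀ i, p i o ≤ f o + i * θ := by
    intro i
    have := hup 0 i
    rw [zero_add, hp0] at this
    exact this
  have hdlow : ∀ i, p i o - 4 ≤ d o (z i) := by
    intro i
    obtain ⟨y, hy⟩ := hx ((h i)⁻¹ • o)
    have e1 := hz1 i (h i • y)
    have e2 : d ((h i)⁻¹ • o) y = d o (h i • y) := by
      rw [← D.act (h i), smul_inv_smul]
    have t := D.tri o (z i) (h i • y)
    rw [D.symm (z i)] at t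
    have t' : (d o (h i • y) : ℝ) ≤ d o (z i) + d (h i • y) (z i) := by exact_mod_cast t
    rw [e2] at hy
    simp only [p, inv_smul_smul] at e1 ⊢
    linarith
  let t : ℕ → ℕ := fun i => ⌊(i : ℝ) * θ⌋₊
  have hzt : ∀ i k, d (z i) (z (i + k)) + t i ≤ t (i + k) := by
    intro i k
    induction k with
    | zero => simp [D.zero]
    | succ k ih =>
      have e1 := hz2 (i + k)
      have e2 := D.tri (z i) (z (i + k)) (z (i + k + 1))
      simp only [t, ← add_assoc] at ih ⊢
      omega
  -- states
  let w : ℕ → V := fun i => (h i)⁻¹ • z i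
  have hw : ∀ i u, (d u (w i) : ℝ) ≤ f u + 2 := by
    intro i u
    have e := hz1 i (h i • u)
    simp only [p, inv_smul_smul] at e
    rwa [← D.act (h i), smul_inv_smul]
  have hww : ∀ i j, d (w i) (w j) ≤ 6 := by
    intro i j
    have e1 := near_bound D f hx (w i) (hw i)
    have e2 := hw j (w i)
    have : (d (w i) (w j) : ℝ) ≤ 6 := by linarith
    exact_mod_cast this
  obtain ⟨B, hBc, hB⟩ := hβ (w 0)
  let st : ℕ → V × Finset V × ℤ := fun a =>
    (w (N * a), B.filter (fun v => d o (h (N * a) • v) < d o (z (N * a))),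
      (d o (z (N * a)) : ℤ) - t (N * a))
  have hmaps : ∀ a ∈ Finset.range (M + 1),
      st a ∈ B ×ˢ (B.powerset ×ˢ Finset.Icc (⌊f o⌋ - 6) (⌊f o⌋ + 5)) := by
    intro a ha
    have ha' : a ≤ M := by simpa [Nat.lt_succ_iff] using ha
    have hi : N * a ≤ K := Nat.mul_le_mul_left N ha'
    have q1 := hlow _ hi
    have q2 := hupp (N * a)
    have q3 := hdlow (N * a)
    have q4 := hz1 (N * a) o
    have q5 := Nat.floor_le (show 0 ≤ ((N * a : ℕ) : ℝ) * θ by positivity)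
    have q6 := Nat.lt_floor_add_one (((N * a : ℕ) : ℝ) * θ)
    have q7 := Int.floor_le (f o)
    have q8 := Int.lt_floor_add_one (f o)
    simp only [st, Finset.mem_product, Finset.mem_powerset, Finset.filter_subset, true_and,
      Finset.mem_Icc]
    refine ⟨hB _ ((hww _ _).trans (by norm_num)), ?_, ?_⟩
    · have : ((⌊f o⌋ - 6 : ℤ) : ℝ) ≤ (((d o (z (N * a)) : ℤ) - t (N * a) : ℤ) : ℝ) := by
        simp only [t]; push_cast at *; linarith
      exact_mod_cast this
    · have : (((d o (z (N * a)) : ℤ) - t (N * a) : ℤ) : ℝ) ≤ ((⌊f o⌋ + 5 : ℤ) : ℝ) := by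
        simp only [t]; push_cast at *; linarith
      exact_mod_cast this
  have hcard : (B ×ˢ (B.powerset ×ˢ Finset.Icc (⌊f o⌋ - 6) (⌊f o⌋ + 5))).card <
      (Finset.range (M + 1)).card := by
    rw [Finset.card_product, Finset.card_product, Finset.card_powerset, Int.card_Icc,
      Finset.card_range]
    have : (⌊f o⌋ + 5 + 1 - (⌊f o⌋ - 6)).toNat = 12 := by
      rw [show ⌊f o⌋ + 5 + 1 - (⌊f o⌋ - 6) = 12 by ring]; rfl
    rw [this]
    have : B.card * (2 ^ B.card * 12) ≤ β * (2 ^ β * 12) := by gcongr; norm_num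
    omega
  obtain ⟨a, b, hab, hst⟩ : ∃ a b, a < b ∧ st a = st b := by
    obtain ⟨a, -, b, -, hne, he⟩ := Finset.exists_ne_map_eq_of_card_lt_of_maps_to hcard hmaps
    rcases lt_or_gt_of_ne hne with hlt | hlt
    · exact ⟨a, b, hlt, he⟩
    · exact ⟨b, a, hlt, he.symm⟩
  simp only [st, Prod.mk.injEq] at hst
  obtain ⟨s1, s2, s3⟩ := hst
  set i := N * a with hi
  set j := N * b with hj
  have hij : i + N ≤ j := by
    rw [hi, hj, ← Nat.mul_succ]; exact Nat.mul_le_mul_left N hab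
  have ht : t i < t j := by
    simp only [t]
    rw [Nat.lt_iff_add_one_le]
    apply Nat.le_floor
    have q5 := Nat.floor_le (show 0 ≤ (i : ℝ) * θ by positivity)
    have : ((i + N : ℕ) : ℝ) * θ ≤ j * θ := by gcongr
    have h4 : (N : ℝ) * ρ ≤ N * θ := by gcongr; linarith
    push_cast at *
    linarith
  have hzij := hzt i (j - i)
  rw [Nat.add_sub_cancel' (by omega)] at hzij
  have hgz : (h j * (h i)⁻¹) • z i = z j := by
    rw [mul_smul]
    change h j • w i = z j
    rw [s1]
    simp [w]
  have htri := D.tri o (z i) (z j)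
  have hclos : ∀ i, h i ∈ Subgroup.closure S := fun i =>
    Subgroup.list_prod_mem _ (fun s hs => Subgroup.subset_closure (hlS s (List.mem_of_mem_take hs)))
  refine ⟨h j * (h i)⁻¹, mul_mem (hclos j) (inv_mem (hclos i)),
    pump D o (z i) _ (t j - t i) (by omega) ?_ ?_ ?_⟩
  · rw [hgz]; omega
  · rw [hgz]; omega
  · intro v hv
    rw [hgz]
    have hvB : (h i)⁻¹ • v ∈ B := by
      apply hB
      have e1 := D.tri (w 0) (w i) ((h i)⁻¹ • v)
      have e2 : d (w i) ((h i)⁻¹ • v) = d (z i) v := D.act _ _ _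
      have e3 := hww 0 i
      have e4 := D.symm v (z i)
      omega
    have e := Finset.ext_iff.1 s2 ((h i)⁻¹ • v)
    simp only [Finset.mem_filter, hvB, true_and, smul_inv_smul] at e
    rw [mul_smul]
    exact e

lemma card_bound (D : HD d G) (H : Subgroup G) (htor : ∀ h ∈ H, IsOfFinOrder h) (x : V)
    (β : ℕ) (hβ : ∀ z, ∃ B : Finset V, B.card ≤ β ∧ ∀ v, d z v ≤ 7 → v ∈ B)
    (S : Set G) (hSf : S.Finite) (hSH : S ⊆ H) (hS : ∀ s ∈ S, s⁻¹ ∈ S) :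
    ∃ z, ∀ s ∈ S, d z (s • z) ≤ 7 := by
  have hex : ∃ θ, 0 ≤ θ ∧ Good d S x θ := by
    obtain ⟨m, hm⟩ := (hSf.image (fun s => d x (s • x))).bddAbove
    refine ⟨m, by positivity, 0, fun l => ?_⟩
    induction l with
    | nil => intro _; simp [D.zero]
    | cons s l ih =>
      intro h
      have h1 := ih (fun t ht => h t (List.mem_cons_of_mem _ ht))
      have h2 : d x (s • x) ≤ m := hm ⟨s, h s List.mem_cons_self, rfl⟩
      have h3 := D.tri x (s • x) (s • l.prod • x)
      rw [D.act] at h3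
      rw [List.prod_cons, mul_smul, List.length_cons]
      have h2' : (d x (s • x) : ℝ) ≤ m := by exact_mod_cast h2
      have h3' : (d x (s • l.prod • x) : ℝ) ≤ d x (s • x) + d x (l.prod • x) := by
        exact_mod_cast h3
      push_cast
      linarith
  let T : Set ℝ := {θ | 0 ≤ θ ∧ Good d S x θ}
  have hTb : BddBelow T := ⟨0, fun θ h => h.1⟩
  have hup : ∀ θ θ', θ ≤ θ' → Good d S x θ → Good d S x θ' := by
    rintro θ θ' hle ⟨c, hc⟩
    refine ⟨c, fun l h => (hc l h).trans ?_⟩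
    gcongr
  have hgood : ∀ θ, sInf T < θ → Good d S x θ := by
    intro θ h
    obtain ⟨θ', h1, h2⟩ := exists_lt_of_csInf_lt hex h
    exact hup _ _ h2.le h1.2
  have hnot : ∀ θ, 0 ≤ θ → θ < sInf T → ¬ Good d S x θ := by
    intro θ h0 h hg
    exact absurd (csInf_le hTb ⟨h0, hg⟩) (not_le.2 h)
  have hle : sInf T ≤ 0 := by
    by_contra hc
    obtain ⟨h, hh, hinf⟩ := drift_contra D S hS x (sInf T) (not_le.1 hc) hnot hgood β hβ
    exact hinf (htor h ((Subgroup.closure_le H).2 hSH hh))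
  obtain ⟨f, hf, hl, hx⟩ := exists_fun D S hS x 1 (by norm_num) (hgood 1 (by linarith))
  obtain ⟨z, hz⟩ := exists_near D f hf
  refine ⟨z, fun s hs => ?_⟩
  have e1 := near_bound D f hx z (fun u => by linarith [hz u])
  have e2 := hz (s • z)
  have e3 := abs_le.1 (hl s hs z)
  rw [D.symm] at e2
  have : (d z (s • z) : ℝ) ≤ 7 := by linarith [e3.2]
  exact_mod_cast this

end
end HellyTorsion

namespace HellyTorsion

lemma graph_between {V : Type*} (Γ : SimpleGraph V) (hc : Γ.Connected) {a b : V}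
    (p : Γ.Walk a b) : ∀ r s : ℕ, p.length ≤ r + s → ∃ y, Γ.dist a y ≤ r ∧ Γ.dist b y ≤ s := by
  induction p with
  | @nil u => intro r s _; exact ⟨u, by simp, by simp⟩
  | @cons u v w hadj p ih =>
    intro r s hl
    rcases r with _ | r
    · refine ⟨u, by simp, ?_⟩
      rw [SimpleGraph.dist_comm]
      exact (SimpleGraph.dist_le (Walk.cons hadj p)).trans (by omega)
    · rw [Walk.length_cons] at hl
      obtain ⟨y, hy1, hy2⟩ := ih r s (by omega)
      have h1 := hc.dist_triangle (u := u) (v := v) (w := y)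
      have h2 := SimpleGraph.dist_eq_one_iff_adj.2 hadj
      exact ⟨y, by omega, hy2⟩

lemma graph_dist_le {V : Type*} (Γ : SimpleGraph V) (hc : Γ.Connected) {G : Type*} [Group G]
    [MulAction G V] (hact : ∀ (g : G) (u v : V), Γ.Adj (g • u) (g • v) ↔ Γ.Adj u v)
    (g : G) (u v : V) : Γ.dist (g • u) (g • v) ≤ Γ.dist u v := by
  obtain ⟨p, hp⟩ := hc.exists_walk_length_eq_dist u v
  let φ : Γ →g Γ := ⟨fun x => g • x, fun {a b} h => (hact g a b).2 h⟩
  have := SimpleGraph.dist_le (p.map φ)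
  rw [Walk.length_map, hp] at this
  exact this

lemma graph_ball_finite {V : Type*} (Γ : SimpleGraph V) (hc : Γ.Connected)
    (hlf : ∀ v : V, (Γ.neighborSet v).Finite) (z : V) (r : ℕ) : {v | Γ.dist z v ≤ r}.Finite := by
  induction r with
  | zero =>
    refine (Set.finite_singleton z).subset (fun v hv => ?_)
    have : Γ.dist z v = 0 := Nat.le_zero.1 hv
    exact (hc.dist_eq_zero_iff.1 this).symm
  | succ r ih =>
    refine (ih.union (ih.biUnion (fun u _ => hlf u))).subset (fun v hv => ?_)
    obtain ⟨p, hp⟩ := hc.exists_walk_length_eq_dist v z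
    have hv' : Γ.dist v z ≤ r + 1 := by rw [SimpleGraph.dist_comm]; exact hv
    cases p with
    | nil => left; simp
    | @cons _ u _ hadj p =>
      right
      rw [Walk.length_cons] at hp
      refine Set.mem_biUnion (x := u) ?_ hadj.symm
      have := SimpleGraph.dist_le p
      change Γ.dist z u ≤ r
      rw [SimpleGraph.dist_comm]
      omega

lemma graph_HD {V : Type*} (Γ : SimpleGraph V) (hΓ : IsHellyGraph Γ) (G : Type*) [Group G]
    [MulAction G V] (hact : ∀ (g : G) (u v : V), Γ.Adj (g • u) (g • v) ↔ Γ.Adj u v) :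
    HD Γ.dist G where
  zero x := by simp
  symm x y := SimpleGraph.dist_comm
  tri x y z := hΓ.1.dist_triangle
  helly S h := hΓ.2 S (fun p hp q hq => by
    obtain ⟨w, hw⟩ := hΓ.1.exists_walk_length_eq_dist p.1 q.1
    exact graph_between Γ hΓ.1 w _ _ (by rw [hw]; exact h p hp q hq))
  act g u v := by
    apply le_antisymm (graph_dist_le Γ hΓ.1 hact g u v)
    have := graph_dist_le Γ hΓ.1 hact g⁻¹ (g • u) (g • v)
    rwa [inv_smul_smul, inv_smul_smul] at this

end HellyTorsion

/-- Torsion subgroups of groups acting geometrically (metrically properly and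
cocompactly) on locally finite Helly graphs are finite. -/
theorem helly_torsion_subgroup_finite {V : Type*} (Γ : SimpleGraph V)
    (hΓ : IsHellyGraph Γ) (hlf : ∀ v : V, (Γ.neighborSet v).Finite)
    (G : Type*) [Group G] [MulAction G V]
    (hact : ∀ (g : G) (u v : V), Γ.Adj (g • u) (g • v) ↔ Γ.Adj u v)
    (hproper : ∀ (x : V) (r : ℕ), {g : G | Γ.dist x (g • x) ≤ r}.Finite)
    (hcocompact : ∃ s : Finset V, ∀ v : V, ∃ g : G, ∃ u ∈ s, g • u = v)
    (H : Subgroup G) (htor : ∀ h ∈ H, IsOfFinOrder h) :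
    (H : Set G).Finite := by
  classical
  have D := HellyTorsion.graph_HD Γ hΓ G hact
  obtain ⟨s, hs⟩ := hcocompact
  obtain ⟨x⟩ := hΓ.1.nonempty
  have hfin := fun u => HellyTorsion.graph_ball_finite Γ hΓ.1 hlf u 7
  have hprop := fun u => hproper u 7
  -- uniform bound on balls
  have hβ : ∀ z, ∃ B : Finset V, B.card ≤ ∑ u ∈ s, (hfin u).toFinset.card ∧
      ∀ v, Γ.dist z v ≤ 7 → v ∈ B := by
    intro z
    obtain ⟨g, u, hu, rfl⟩ := hs z
    refine ⟨(hfin u).toFinset.image (fun v => g • v), Finset.card_image_le.trans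
      (Finset.single_le_sum (f := fun u => (hfin u).toFinset.card) (fun _ _ => Nat.zero_le _) hu),
      fun v hv => ?_⟩
    rw [Finset.mem_image]
    refine ⟨g⁻¹ • v, ?_, smul_inv_smul g v⟩
    rw [Set.Finite.mem_toFinset, Set.mem_setOf_eq, ← D.act g, smul_inv_smul]
    exact hv
  by_contra hinf
  obtain ⟨T, hTH, hTc⟩ := Set.Infinite.exists_subset_card_eq hinf
    (∑ u ∈ s, (hprop u).toFinset.card + 1)
  obtain ⟨z, hz⟩ := HellyTorsion.card_bound D H htor x _ hβ ((T : Set G) ∪ (T : Set G)⁻¹)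
    (T.finite_toSet.union T.finite_toSet.inv)
    (by
      rintro g (hg | hg)
      · exact hTH hg
      · have := hTH hg
        exact (inv_mem_iff (H := H)).1 this)
    (by
      rintro g (hg | hg)
      · right; simpa using hg
      · left; exact hg)
  obtain ⟨g, u, hu, rfl⟩ := hs z
  have hle : T.card ≤ (hprop u).toFinset.card := by
    refine Finset.card_le_card_of_injOn (fun k => g⁻¹ * k * g) (fun k hk => ?_) ?_
    · have := hz k (Or.inl hk)
      simp only [Finset.mem_coe, Set.Finite.mem_toFinset, Set.mem_setOf_eq]
      rw [← D.act g, ← mul_smul, mul_assoc, mul_inv_cancel_left, mul_smul]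
      exact this
    · intro a _ b _ hab
      simpa using hab
  have := Finset.single_le_sum (f := fun u => (hprop u).toFinset.card)
    (fun _ _ => Nat.zero_le _) hu
  omega
end

section
/- Let X be a uniformly locally finite connected graph (there is D ∈ ℕ with every vertex of degree at most D) whose path metric is Gromov hyperbolic, i.e., there is δ ≥ 0 such that d(x,y) + d(z,w) ≤ max(d(x,z) + d(y,w), d(x,w) + d(y,z)) + 2δ for all vertices x, y, z, w. Let G be a finitely generated group acting on X by graph automorphisms such that every element of G has bounded orbits (the action is locally elliptic). Then G has a bounded orbit on the vertices of X (the action is elliptic). In particular, every action of a finitely generated torsion group on X by automorphisms has a bounded orbit. -/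
open SimpleGraph Pointwise

namespace HypEll

/-- Group elements acting by graph automorphisms preserve the path metric. -/
lemma dist_smul {V : Type*} (Γ : SimpleGraph V) (hconn : Γ.Connected)
    {G : Type*} [Group G] [MulAction G V]
    (hact : ∀ (g : G) (u v : V), Γ.Adj (g • u) (g • v) ↔ Γ.Adj u v) (g : G) (u v : V) :
    Γ.dist (g • u) (g • v) = Γ.dist u v := by
  have key : ∀ (g : G) (u v : V), Γ.dist (g • u) (g • v) ≤ Γ.dist u v := by
    intro g u v
    obtain ⟨p, hp⟩ := hconn.exists_walk_length_eq_dist u v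
    let f : Γ →g Γ := ⟨fun w => g • w, fun {a b} h => (hact g a b).2 h⟩
    have := Γ.dist_le (p.map f)
    rw [Walk.length_map, hp] at this
    exact this
  refine le_antisymm (key g u v) ?_
  have := key g⁻¹ (g • u) (g • v)
  simpa using this

/-- Points on geodesics. -/
lemma exists_between {V : Type*} (Γ : SimpleGraph V) (hconn : Γ.Connected) (u v : V) (k : ℕ)
    (hk : k ≤ Γ.dist u v) : ∃ y, Γ.dist u y = k ∧ Γ.dist y v + k = Γ.dist u v := by
  obtain ⟨p, hp⟩ := hconn.exists_walk_length_eq_dist u v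
  refine ⟨p.getVert k, ?_⟩
  have h1 := Γ.dist_le (p.take k)
  have h2 := Γ.dist_le (p.drop k)
  have h3 := hconn.dist_triangle (u := u) (v := p.getVert k) (w := v)
  rw [Walk.take_length] at h1
  rw [Walk.drop_length] at h2
  omega

/-- Balls have uniformly bounded size. -/
lemma ball_card {V : Type*} (Γ : SimpleGraph V) (hconn : Γ.Connected)
    (D : ℕ) (hulf : ∀ v : V, (Γ.neighborSet v).Finite ∧ (Γ.neighborSet v).ncard ≤ D) (C : ℕ) :
    ∃ N : ℕ, ∀ x : V, ∃ A : Finset V, A.card ≤ N ∧ ∀ y, Γ.dist x y ≤ C → y ∈ A := by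
  classical
  induction C with
  | zero =>
    refine ⟨1, fun x => ⟨{x}, by simp, fun y hy => ?_⟩⟩
    have : Γ.dist x y = 0 := by omega
    rw [hconn.dist_eq_zero_iff] at this
    simp [this]
  | succ C ih =>
    obtain ⟨N, hN⟩ := ih
    refine ⟨N + N * D, fun x => ?_⟩
    obtain ⟨A, hA, hA'⟩ := hN x
    refine ⟨A ∪ A.biUnion (fun v => (hulf v).1.toFinset), ?_, ?_⟩
    · refine (Finset.card_union_le _ _).trans (add_le_add hA ?_)
      refine (Finset.card_biUnion_le_card_mul _ _ D ?_).trans (Nat.mul_le_mul_right _ hA)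
      intro v _
      rw [← Set.ncard_eq_toFinset_card _ (hulf v).1]
      exact (hulf v).2
    · intro y hy
      rcases Nat.lt_or_ge C (Γ.dist x y) with h | h
      · obtain ⟨z, hz1, hz2⟩ := exists_between Γ hconn x y C h.le
        have h1 : Γ.dist z y = 1 := by omega
        rw [dist_eq_one_iff_adj] at h1
        refine Finset.mem_union_right _ (Finset.mem_biUnion.2 ⟨z, hA' z hz1.le, ?_⟩)
        simpa using h1
      · exact Finset.mem_union_left _ (hA' y h)

section metric
variable {V G : Type*} [Group G] [MulAction G V] (d : V → V → ℝ) (δ : ℝ)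

/-- If `g` has bounded orbits then `g ^ 2` moves `x` not much more than `g`. -/
lemma elliptic_sq (hδ : 0 ≤ δ) (hsymm : ∀ u v, d u v = d v u)
    (hhyp : ∀ x y z w : V, d x y + d z w ≤ max (d x z + d y w) (d x w + d y z) + 2 * δ)
    (hinv : ∀ (g : G) (u v : V), d (g • u) (g • v) = d u v)
    (hle : ∀ (g : G) (x : V), ∃ C : ℝ, ∀ n : ℕ, d x ((g ^ n) • x) ≤ C) (g : G) (x : V) :
    d x (g • g • x) ≤ d x (g • x) + 2 * δ := by
  by_contra! hcon
  obtain ⟨C, hC⟩ := hle g x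
  set a : ℕ → ℝ := fun n => d x ((g ^ n) • x) with ha
  have ha1 : d x (g • x) = a 1 := by simp [ha]
  have ha2 : d x (g • g • x) = a 2 := by simp [ha, pow_two, mul_smul]
  rw [ha1, ha2] at hcon
  have hrec : ∀ n, a 2 + a (n + 1) ≤ max (a 1 + a n) (a (n + 2) + a 1) + 2 * δ := by
    intro n
    have h := hhyp x (g • g • x) (g • x) ((g ^ (n + 2)) • x)
    have e1 : d (g • x) ((g ^ (n + 2)) • x) = a (n + 1) := by
      rw [show n + 2 = (n + 1) + 1 from rfl, pow_succ' g (n + 1), mul_smul, hinv]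
    have e2 : d (g • g • x) ((g ^ (n + 2)) • x) = a n := by
      rw [pow_succ' g (n + 1), mul_smul, hinv, pow_succ' g n, mul_smul, hinv]
    have e3 : d (g • g • x) (g • x) = a 1 := by
      rw [hinv, hsymm, ha1]
    rw [e1, e2, e3, ha1, ha2] at h
    exact h
  obtain ⟨ε, hε⟩ : ∃ ε, ε = a 2 - a 1 - 2 * δ := ⟨_, rfl⟩
  have hεp : 0 < ε := by rw [hε]; linarith
  have hstep : ∀ n, a n < a (n + 1) → a (n + 1) + ε ≤ a (n + 2) := by
    intro n hn
    have h := hrec n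
    rcases max_cases (a 1 + a n) (a (n + 2) + a 1) with h' | h'
    · rw [h'.1] at h
      linarith
    · rw [h'.1] at h
      linarith
  have hgrow : ∀ n, a (n + 1) + ε ≤ a (n + 2) := by
    intro n
    induction n with
    | zero => simp only [zero_add]; linarith
    | succ n ih => exact hstep (n + 1) (by linarith)
  have hlin : ∀ n : ℕ, a 1 + n * ε ≤ a (n + 1) := by
    intro n
    induction n with
    | zero => simp
    | succ n ih =>
      have := hgrow n
      push_cast
      linarith
  obtain ⟨n, hn⟩ := exists_nat_gt ((C - a 1) / ε)
  rw [div_lt_iff₀ hεp] at hn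
  have h1 := hlin n
  have h2 : a (n + 1) ≤ C := hC (n + 1)
  linarith

/-- Two elements with large displacement move `x` in the same direction. -/
lemma pair_dir (hδ : 0 ≤ δ) (hsymm : ∀ u v, d u v = d v u)
    (htri : ∀ u v w, d u w ≤ d u v + d v w)
    (hhyp : ∀ x y z w : V, d x y + d z w ≤ max (d x z + d y w) (d x w + d y z) + 2 * δ)
    (hinv : ∀ (g : G) (u v : V), d (g • u) (g • v) = d u v)
    (hsq : ∀ (g : G) (x : V), d x (g • g • x) ≤ d x (g • x) + 2 * δ)
    (K : ℝ) (hK : 0 ≤ K) (g h : G) (x : V)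
    (hg : 3 * K + 7 * δ + 1 ≤ d x (g • x)) (hh : 3 * K + 7 * δ + 1 ≤ d x (h • x)) :
    d (g • x) (h • x) ≤ d x (g • x) + d x (h • x) - 2 * K := by
  -- comparison of Gromov products
  have aux : ∀ (g h : G), 3 * K + 7 * δ + 1 ≤ d x (g • x) → 
      d x (g • x) + d x (h • x) - 2 * K < d (g • x) (h • x) →
      d x (g • x) + d x (h • x) - 2 * K - 2 * δ ≤ d x (g • h • x) := by
    intro g h hg hc
    have h1 := hhyp (g • x) (h • x) x (g⁻¹ • x)
    have e1 : d x (g⁻¹ • x) = d x (g • x) := by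
      rw [← hinv g x (g⁻¹ • x), smul_inv_smul, hsymm]
    have e2 : d (g • x) (g⁻¹ • x) = d x (g • g • x) := by
      rw [← hinv g (g • x) (g⁻¹ • x), smul_inv_smul, hsymm]
    have e3 : d (h • x) (g⁻¹ • x) = d x (g • h • x) := by
      rw [← hinv g (h • x) (g⁻¹ • x), smul_inv_smul, hsymm]
    rw [e1, e2, e3, hsymm (g • x) x, hsymm (h • x) x] at h1
    have h2 := hsq g x
    rcases max_cases (d x (g • x) + d x (g • h • x)) (d x (g • g • x) + d x (h • x)) with h' | h'
    · rw [h'.1] at h1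
      linarith
    · rw [h'.1] at h1
      linarith
  by_contra! hc
  have A := aux g h hg hc
  have B := aux h g hh (by rw [hsymm (h • x)]; linarith)
  -- the chain x, gx, ghx, ghgx, ghghx
  have q1 := hhyp x (g • h • x) (g • x) (g • h • g • x)
  have q2 := hhyp x (g • h • g • x) (g • h • x) (g • h • g • h • x)
  have q3 := hsq (g * h) x
  have t1 := htri x (g • x) (g • h • x)
  simp only [hinv, mul_smul] at q1 q2 q3 t1
  rw [hsymm (h • x) x] at q1
  rw [hsymm (g • x) x] at q2
  rcases max_cases (d x (g • x) + d x (g • x))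
    (d x (g • h • g • x) + d x (h • x)) with h1 | h1
  · rw [h1.1] at q1
    linarith
  · rw [h1.1] at q1
    rcases max_cases (d x (g • h • x) + d x (h • x))
      (d x (g • h • g • h • x) + d x (g • x)) with h2 | h2
    · rw [h2.1] at q2
      linarith
    · rw [h2.1] at q2
      linarith

end metric

/-- A finite set of elements of a locally elliptic group almost fixes a common point, with
a uniform constant. -/
lemma common_almost_fixed {V : Type*} (Γ : SimpleGraph V) (hconn : Γ.Connected)
    (δ : ℝ) (hδ : 0 ≤ δ)
    (hhyp : ∀ x y z w : V,
      (Γ.dist x y : ℝ) + (Γ.dist z w : ℝ) ≤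
        max ((Γ.dist x z : ℝ) + (Γ.dist y w : ℝ))
            ((Γ.dist x w : ℝ) + (Γ.dist y z : ℝ)) + 2 * δ)
    {G : Type*} [Group G] [MulAction G V]
    (hact : ∀ (g : G) (u v : V), Γ.Adj (g • u) (g • v) ↔ Γ.Adj u v)
    (hle : ∀ (g : G) (x : V), ∃ C : ℕ, ∀ n : ℤ, Γ.dist x ((g ^ n) • x) ≤ C) :
    ∃ C : ℕ, ∀ F : Finset G, ∃ x : V, ∀ f ∈ F, Γ.dist x (f • x) ≤ C := by
  classical
  obtain ⟨d, hd⟩ : ∃ d : V → V → ℝ, ∀ u v, d u v = (Γ.dist u v : ℝ) := ⟨_, fun _ _ => rfl⟩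
  have hsymm : ∀ u v, d u v = d v u := fun u v => by rw [hd, hd, dist_comm]
  have htri : ∀ u v w, d u w ≤ d u v + d v w := fun u v w => by
    rw [hd, hd, hd]; exact_mod_cast hconn.dist_triangle
  have hhyp' : ∀ x y z w : V, d x y + d z w ≤ max (d x z + d y w) (d x w + d y z) + 2 * δ := by
    intro x y z w
    simpa only [hd] using hhyp x y z w
  have hinv : ∀ (g : G) (u v : V), d (g • u) (g • v) = d u v := fun g u v => by
    rw [hd, hd, dist_smul Γ hconn hact]
  have hle' : ∀ (g : G) (x : V), ∃ C : ℝ, ∀ n : ℕ, d x ((g ^ n) • x) ≤ C := by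
    intro g x
    obtain ⟨C, hC⟩ := hle g x
    refine ⟨C, fun n => ?_⟩
    have := hC n
    rw [zpow_natCast] at this
    rw [hd]
    exact_mod_cast this
  have hsq := elliptic_sq d δ hδ hsymm hhyp' hinv hle'
  obtain ⟨K, hK⟩ := exists_nat_gt (3 * δ)
  obtain ⟨T, hT⟩ := exists_nat_ge (3 * (K : ℝ) + 7 * δ + 1)
  refine ⟨T + 2 * K, fun F => ?_⟩
  -- minimise the maximal displacement
  let m : V → ℕ := fun x => F.sup (fun f => Γ.dist x (f • x))
  obtain ⟨x, hx⟩ : ∃ x, ∀ y, m x ≤ m y := by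
    have hne : Nonempty V := hconn.nonempty
    exact ⟨Function.argmin m, fun y => Function.argmin_le m y⟩
  have hmx : ∀ f ∈ F, Γ.dist x (f • x) ≤ m x := fun f hf =>
    Finset.le_sup (f := fun f => Γ.dist x (f • x)) hf
  refine ⟨x, fun f hf => ?_⟩
  by_contra! hcon
  have hL : T + 2 * K < m x := lt_of_lt_of_le hcon (hmx f hf)
  have hfT : (T : ℝ) ≤ d x (f • x) := by
    rw [hd]; exact_mod_cast (by omega : T ≤ Γ.dist x (f • x))
  obtain ⟨y, hy1, hy2⟩ := exists_between Γ hconn x (f • x) K (by omega)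
  have hy1' : d x y = K := by rw [hd, hy1]
  have hy2' : d y (f • x) + K = d x (f • x) := by rw [hd, hd]; exact_mod_cast hy2
  have hK0 : (0 : ℝ) ≤ K := Nat.cast_nonneg K
  have hdir : ∀ h : G, (T : ℝ) ≤ d x (h • x) → d y (h • x) ≤ d x (h • x) - K + 2 * δ := by
    intro h hh
    have h1 := pair_dir d δ hδ hsymm htri hhyp' hinv hsq K hK0 f h x (by linarith) (by linarith)
    have h2 := hhyp' y (h • x) x (f • x)
    rw [hsymm y x, hsymm (h • x) (f • x), hsymm (h • x) x] at h2
    rcases max_cases (d x y + d (f • x) (h • x)) (d y (f • x) + d x (h • x)) with h' | h'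
    · rw [h'.1] at h2
      linarith
    · rw [h'.1] at h2
      linarith
  have hlt : ∀ h ∈ F, Γ.dist y (h • y) < m x := by
    intro h hh
    have hhm := hmx h hh
    have hhm' : d x (h • x) ≤ m x := by rw [hd]; exact_mod_cast hhm
    have hL' : (T : ℝ) + 2 * K < m x := by exact_mod_cast hL
    have goal : d y (h • y) < m x := by
      rcases lt_or_ge (d x (h • x)) T with hlt | hge
      · have t1 := htri y x (h • y)
        have t2 := htri x (h • x) (h • y)
        rw [hinv] at t2
        rw [hsymm y x] at t1
        linarith
      · have h1 := hdir h hge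
        have e1 : d x (h⁻¹ • x) = d x (h • x) := by
          rw [← hinv h x (h⁻¹ • x), smul_inv_smul, hsymm]
        have h2 := hdir h⁻¹ (by rw [e1]; exact hge)
        have e2 : d y (h⁻¹ • x) = d x (h • y) := by
          rw [← hinv h y (h⁻¹ • x), smul_inv_smul, hsymm]
        rw [e1, e2] at h2
        have h3 := hhyp' y (h • y) x (h • x)
        rw [hinv, hsymm y x, hsymm (h • y) x] at h3
        rcases max_cases (d x y + d y x) (d y (h • x) + d x (h • y)) with h' | h' <;>
        · rw [hsymm y x] at h'
          rw [h'.1] at h3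
          linarith
    rw [hd] at goal
    exact_mod_cast goal
  have : m y < m x := by
    rw [Finset.sup_lt_iff (by rw [Nat.bot_eq_zero]; omega)]
    exact hlt
  exact absurd (hx y) (by omega)

end HypEll

/-- Locally elliptic actions of finitely generated groups on uniformly locally
finite Gromov hyperbolic graphs are elliptic. -/
theorem hyperbolic_graph_locally_elliptic_implies_elliptic {V : Type*}
    (Γ : SimpleGraph V) (hconn : Γ.Connected)
    (D : ℕ) (hulf : ∀ v : V, (Γ.neighborSet v).Finite ∧ (Γ.neighborSet v).ncard ≤ D)
    (δ : ℝ) (hδ : 0 ≤ δ)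
    (hhyp : ∀ x y z w : V,
      (Γ.dist x y : ℝ) + (Γ.dist z w : ℝ) ≤
        max ((Γ.dist x z : ℝ) + (Γ.dist y w : ℝ))
            ((Γ.dist x w : ℝ) + (Γ.dist y z : ℝ)) + 2 * δ)
    (G : Type*) [Group G] [Group.FG G] [MulAction G V]
    (hact : ∀ (g : G) (u v : V), Γ.Adj (g • u) (g • v) ↔ Γ.Adj u v)
    (hle : ∀ (g : G) (x : V), ∃ C : ℕ, ∀ n : ℤ, Γ.dist x ((g ^ n) • x) ≤ C) :
    ∃ (x : V) (C : ℕ), ∀ g : G, Γ.dist x (g • x) ≤ C := by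
  classical
  obtain ⟨C, hC⟩ := HypEll.common_almost_fixed Γ hconn δ hδ hhyp hact hle
  obtain ⟨N, hN⟩ := HypEll.ball_card Γ hconn D hulf C
  obtain ⟨S, hS⟩ := Monoid.fg_def.1 (Group.fg_iff_monoid_fg.1 (inferInstance : Group.FG G))
  let B : ℕ → Finset G := fun k => (insert 1 S) ^ k
  have hBsucc : ∀ k, B (k + 1) = (insert 1 S) * B k := fun k => pow_succ' _ _
  have hBmono : ∀ k, B k ⊆ B (k + 1) := by
    intro k g hg
    rw [hBsucc]
    simpa using Finset.mul_mem_mul (Finset.mem_insert_self 1 S) hg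
  obtain ⟨x, hx⟩ := hC (B N)
  obtain ⟨A, hA, hA'⟩ := hN x
  let O : ℕ → Finset V := fun k => (B k).image (fun g => g • x)
  have hOmono : ∀ k, O k ⊆ O (k + 1) := fun k => Finset.image_subset_image (hBmono k)
  have hONA : O N ⊆ A := by
    intro y hy
    obtain ⟨g, hg, rfl⟩ := Finset.mem_image.1 hy
    exact hA' _ (hx g hg)
  -- the increasing sequence of partial orbits stabilises
  obtain ⟨k, hk⟩ : ∃ k, O (k + 1) = O k := by
    by_contra! hne
    have hcard : ∀ k, k + 1 ≤ (O k).card := by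
      intro k
      induction k with
      | zero => simp [O, B]
      | succ k ih =>
        have := Finset.card_lt_card ((hOmono k).ssubset_of_ne (hne k).symm)
        omega
    have h1 := hcard N
    have h2 := Finset.card_le_card hONA
    omega
  have hstab : ∀ s ∈ S, ∀ y ∈ O k, s • y ∈ O k := by
    intro s hs y hy
    obtain ⟨g, hg, rfl⟩ := Finset.mem_image.1 hy
    rw [← hk]
    refine Finset.mem_image.2 ⟨s * g, ?_, mul_smul _ _ _⟩
    rw [hBsucc]
    exact Finset.mul_mem_mul (Finset.mem_insert_of_mem hs) hg
  have hall : ∀ g : G, ∀ y ∈ O k, g • y ∈ O k := by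
    intro g
    have hg : g ∈ Submonoid.closure (S : Set G) := by rw [hS]; trivial
    induction hg using Submonoid.closure_induction with
    | mem s hs => exact hstab s hs
    | one => intro y hy; simpa using hy
    | mul a b _ _ iha ihb => intro y hy; rw [mul_smul]; exact iha _ (ihb _ hy)
  have hxO : x ∈ O k := by
    have h0 : O 0 ⊆ O k := monotone_nat_of_le_succ (f := O) hOmono (Nat.zero_le k)
    exact h0 (by simp [O, B])
  exact ⟨x, (O k).sup (fun y => Γ.dist x y), fun g =>
    Finset.le_sup (f := fun y => Γ.dist x y) (hall g x hxO)⟩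
end
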